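/- Let S = ⋃_{k=1}^m Tₖ be a compact convex set, where each Tₖ = { x ∈ ℝⁿ : gᵏ₁(x) ≥ 0, …, gᵏ_{mₖ}(x) ≥ 0 } is defined by real polynomials gᵏᵢ. Suppose that for every u ∈ ∂S and every pair (k, i) with gᵏᵢ(u) = 0: (1) Tₖ has nonempty interior near u, i.e., for every δ > 0 there exists v ∈ B(u, δ) with gᵏⱼ(v) > 0 for all j = 1, …, mₖ; and (2) gᵏᵢ is either sos-concave or strictly quasi-concave at u. Then S is SDP representable. -/

import Mathlib

open MvPolynomial Metric Set Pointwise Filter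

noncomputable section

/-- `ℝⁿ` with the Euclidean norm. -/
abbrev Rn (n : ℕ) : Type := EuclideanSpace ℝ (Fin n)

/-- A set `S ⊆ ℝⁿ` is SDP representable if it is the projection of a spectrahedron:
there are symmetric matrices `A₀, A i, B j` with
`S = { x | ∃ u, A₀ + Σ xᵢ Aᵢ + Σ uⱼ Bⱼ ⪰ 0 }`. -/
def IsSDPRepresentable {n : ℕ} (S : Set (Rn n)) : Prop :=
  ∃ (N d : ℕ) (A₀ : Matrix (Fin d) (Fin d) ℝ)
    (A : Fin n → Matrix (Fin d) (Fin d) ℝ) (B : Fin N → Matrix (Fin d) (Fin d) ℝ),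
    A₀.IsSymm ∧ (∀ i, (A i).IsSymm) ∧ (∀ j, (B j).IsSymm) ∧
    S = {x : Rn n | ∃ u : Fin N → ℝ,
      (A₀ + ∑ i, x i • A i + ∑ j, u j • B j).PosSemidef}

/-- Evaluation of a polynomial at a point of `ℝⁿ`. -/
def peval {n : ℕ} (g : MvPolynomial (Fin n) ℝ) (x : Rn n) : ℝ :=
  MvPolynomial.eval (fun i => x i) g

/-- The gradient `∇g(u)` of a polynomial. -/
def pgrad {n : ℕ} (g : MvPolynomial (Fin n) ℝ) (u : Rn n) : Fin n → ℝ :=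
  fun i => MvPolynomial.eval (fun j => u j) (MvPolynomial.pderiv i g)

/-- The Hessian `∇²g(u)` of a polynomial. -/
def phess {n : ℕ} (g : MvPolynomial (Fin n) ℝ) (u : Rn n) : Matrix (Fin n) (Fin n) ℝ :=
  Matrix.of fun i j =>
    MvPolynomial.eval (fun k => u k) (MvPolynomial.pderiv i (MvPolynomial.pderiv j g))

/-- A polynomial `g` is sos-concave if `-∇²g(x) = W(x)ᵀ W(x)` for some
(possibly nonsquare) matrix polynomial `W`. -/
def SosConcave {n : ℕ} (g : MvPolynomial (Fin n) ℝ) : Prop :=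
  ∃ (k : ℕ) (W : Fin k → Fin n → MvPolynomial (Fin n) ℝ),
    ∀ i j, - MvPolynomial.pderiv i (MvPolynomial.pderiv j g) = ∑ l, W l i * W l j

/-- `g` is quasi-concave at `u` : `-vᵀ∇²g(u)v ≥ 0` for every `v` with `∇g(u)ᵀv = 0`. -/
def QuasiConcaveAt {n : ℕ} (g : MvPolynomial (Fin n) ℝ) (u : Rn n) : Prop :=
  ∀ v : Fin n → ℝ, (∑ i, pgrad g u i * v i) = 0 →
    0 ≤ -(∑ i, ∑ j, v i * phess g u i j * v j)

/-- `g` is strictly quasi-concave at `u` : if `∇g(u) ≠ 0` then `-vᵀ∇²g(u)v > 0`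
for all nonzero `v ⊥ ∇g(u)`; if `∇g(u) = 0` then `-∇²g(u)` is positive definite. -/
def StrictlyQuasiConcaveAt {n : ℕ} (g : MvPolynomial (Fin n) ℝ) (u : Rn n) : Prop :=
  (pgrad g u ≠ 0 ∧ ∀ v : Fin n → ℝ, v ≠ 0 → (∑ i, pgrad g u i * v i) = 0 →
      0 < -(∑ i, ∑ j, v i * phess g u i j * v j)) ∨
  (pgrad g u = 0 ∧ (-(phess g u)).PosDef)

/-- The convex boundary `∂_c T` : points of `T` minimizing some unit linear functional. -/
def convexBoundary {n : ℕ} (T : Set (Rn n)) : Set (Rn n) :=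
  {u ∈ T | ∃ l : Rn n, ‖l‖ = 1 ∧ ∀ x ∈ T, (∑ i, l i * u i) ≤ ∑ i, l i * x i}

/-- `v` is a nonsingular point of `∂T` (w.r.t. defining polynomials `g`):
exactly one defining polynomial vanishes at `v`, with nonvanishing gradient. -/
def IsNonsingularBoundaryPoint {n m : ℕ} (g : Fin m → MvPolynomial (Fin n) ℝ)
    (T : Set (Rn n)) (v : Rn n) : Prop :=
  v ∈ frontier T ∧ ∃ i, peval (g i) v = 0 ∧ pgrad (g i) v ≠ 0 ∧
    ∀ j, peval (g j) v = 0 → j = i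

/-- A polynomial is SOS if it is a finite sum of squares of polynomials. -/
def IsSOSPoly {n : ℕ} (p : MvPolynomial (Fin n) ℝ) : Prop :=
  ∃ (k : ℕ) (q : Fin k → MvPolynomial (Fin n) ℝ), p = ∑ i, (q i) ^ 2

/-- The polynomial `δ² - ‖x - u‖²`. -/
def ballPoly {n : ℕ} (u : Rn n) (δ : ℝ) : MvPolynomial (Fin n) ℝ :=
  MvPolynomial.C (δ ^ 2) - ∑ i, (MvPolynomial.X i - MvPolynomial.C (u i)) ^ 2

/-- The family `h₁, …, h_{m₂}` extended by the ball polynomial `h_m(x) = δ² - ‖x-u‖²`. -/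
def extFamily {n m2 : ℕ} (h : Fin m2 → MvPolynomial (Fin n) ℝ) (u : Rn n) (δ : ℝ) :
    Fin (m2 + 1) → MvPolynomial (Fin n) ℝ :=
  Fin.snoc h (ballPoly u δ)

/-- The positive definite Lagrange Hessian (PDLH) condition at `u` with radius `δu`,
for the set `T = {x | f(x) = 0, h(x) ≥ 0}`. -/
def PDLHAt {n m1 m2 : ℕ} (f : Fin m1 → MvPolynomial (Fin n) ℝ)
    (h : Fin m2 → MvPolynomial (Fin n) ℝ) (T : Set (Rn n)) (u : Rn n) (δu : ℝ) : Prop :=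
  ∀ l : Rn n, ‖l‖ = 1 → ∀ δ : ℝ, 0 < δ → δ ≤ δu →
    ∀ v ∈ T ∩ closedBall u δ,
      (∀ x ∈ T ∩ closedBall u δ, (∑ i, l i * v i) ≤ ∑ i, l i * x i) →
      ∃ (lam : Fin m1 → ℝ) (mu : Fin (m2 + 1) → ℝ),
        (∀ j, 0 ≤ mu j) ∧
        (∀ j, mu j * peval (extFamily h u δ j) v = 0) ∧
        (∀ i, l i = (∑ k, lam k * pgrad (f k) v i) +
            ∑ j, mu j * pgrad (extFamily h u δ j) v i) ∧
        ∀ x ∈ closedBall u δ,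
          (Matrix.of (fun i i' : Fin n =>
            -(∑ k, lam k * phess (f k) x i i') -
              ∑ j, mu j * phess (extFamily h u δ j) x i i')).PosDef

/-- `Z(g) ∩ ∂S` has strictly convex shape with respect to `S`. -/
def StrictlyConvexShape {n : ℕ} (g : MvPolynomial (Fin n) ℝ) (S : Set (Rn n)) : Prop :=
  ∃ Y U : Set (Rn n), IsOpen U ∧ Y = {x | peval g x = 0} ∩ U ∧
    {x | peval g x = 0} ∩ frontier S ⊆ Y ∧
    (∀ p ∈ closure Y, pgrad g p ≠ 0) ∧
    ∀ p ∈ closure Y,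
      (∃ ε : ℝ, (ε = 1 ∨ ε = -1) ∧
        ∀ q ∈ S ∪ closure Y, ε * (∑ i, pgrad g p i * (q i - p i)) ≤ 0) ∧
      ∀ q ∈ S ∪ closure Y, (∑ i, pgrad g p i * (q i - p i)) = 0 → q = p

/-!
It suffices to find, near every point `u` of `S`, a spectrahedral shadow contained in `S` that
contains all points of `S` close to `u`: by compactness finitely many of them cover `S`, and the
convex hull of finitely many bounded spectrahedral shadows is again a spectrahedral shadow. Interior
points are covered by balls.

At a boundary point `u` with `g(u) = 0` one needs the set `{g ≥ 0}` near `u`. If `g` is strictly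
quasi-concave at `u`, then for large `M` the polynomial `f = g - (M / 2) g²` has the same sign as
`g` near `u`, and its Hessian at `u` is negative definite since `g(u) = 0` makes the correction
`-M ∇g(u) ∇g(u)ᵀ`; a matrix polynomial that is positive definite at `u` lies in the quadratic module
of every small ball around `u`. So in both cases the negated Hessian of `f` has a sum of squares
certificate on a ball, and Jensen's inequality `L(f) ≤ f(L(x))` holds for every truncated
pseudo-moment functional `L` of that ball: along the homotheties `a + t (x - a)`, `a = L(x)`, the
function `t ↦ L(f(a + t (x - a)))` has derivative `0` at `t = 0` and is concave. Hence `{f ≥ 0}`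
intersected with the ball is the projection of the spectrahedral set of those `L` with `L(f) ≥ 0`.
-/

section SpectrahedralCone

variable {V E : Type*} [AddCommGroup V] [Module ℝ V] [AddCommGroup E] [Module ℝ E]

/-- A spectrahedral cone is the preimage of the positive semidefinite cone under a linear map into
the symmetric matrices. The ambient space may be infinite-dimensional. -/
def IsSpectrahedralCone (C : Set V) : Prop :=
  ∃ (d : ℕ) (A : V →ₗ[ℝ] Matrix (Fin d) (Fin d) ℝ),
    (∀ v, (A v).IsSymm) ∧ C = {v | (A v).PosSemidef}

namespace IsSpectrahedralCone

theorem of_bilinForm {W : Type*} [AddCommGroup W] [Module ℝ W] [Module.Finite ℝ W]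
    (B : V →ₗ[ℝ] LinearMap.BilinForm ℝ W) : IsSpectrahedralCone {v | ∀ w, 0 ≤ B v w w} := by
  let b := Module.finBasis ℝ W
  let A := (LinearMap.BilinForm.toMatrix b).toLinearMap ∘ₗ (B + LinearMap.lflip.toLinearMap ∘ₗ B)
  have hA (v) : A v = LinearMap.BilinForm.toMatrix b (B v + (B v).flip) := rfl
  have hsymm (v) : (A v).IsSymm := by
    ext i j
    simp [hA, LinearMap.BilinForm.toMatrix_apply, add_comm]
  refine ⟨_, A, hsymm, Set.ext fun v => ?_⟩
  have hquad (w) : star w ⬝ᵥ (A v).mulVec w =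
      2 * B v (b.equivFun.symm w) (b.equivFun.symm w) := by
    rw [star_trivial, hA, LinearMap.BilinForm.dotProduct_toMatrix_mulVec, two_mul]
    rfl
  have hherm : (A v).IsHermitian := by
    rw [Matrix.IsHermitian, Matrix.conjTranspose_eq_transpose_of_trivial, hsymm v]
  simp only [mem_ofPred_eq, Matrix.posSemidef_iff_dotProduct_mulVec, hherm, true_and, hquad,
    b.equivFun.symm.surjective.forall, Nat.ofNat_pos, mul_nonneg_iff_of_pos_left]

theorem exists_bilinForm {C : Set V} (hC : IsSpectrahedralCone C) :
    ∃ (d : ℕ) (B : V →ₗ[ℝ] LinearMap.BilinForm ℝ (Fin d → ℝ)), C = {v | ∀ w, 0 ≤ B v w w} := by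
  obtain ⟨d, A, hA, rfl⟩ := hC
  refine ⟨d, Matrix.toBilin'.toLinearMap ∘ₗ A, Set.ext fun v => ?_⟩
  simp [Matrix.posSemidef_iff_dotProduct_mulVec, Matrix.IsHermitian,
    Matrix.conjTranspose_eq_transpose_of_trivial, (hA v).eq, Matrix.toBilin'_apply']

theorem preimage {C : Set V} (hC : IsSpectrahedralCone C) (f : E →ₗ[ℝ] V) :
    IsSpectrahedralCone (f ⁻¹' C) := by
  obtain ⟨d, A, hA, rfl⟩ := hC
  exact ⟨d, A ∘ₗ f, fun v => hA (f v), rfl⟩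

theorem inter {C D : Set V} (hC : IsSpectrahedralCone C) (hD : IsSpectrahedralCone D) :
    IsSpectrahedralCone (C ∩ D) := by
  obtain ⟨c, B, rfl⟩ := hC.exists_bilinForm
  obtain ⟨d, B', rfl⟩ := hD.exists_bilinForm
  let P : V →ₗ[ℝ] LinearMap.BilinForm ℝ ((Fin c → ℝ) × (Fin d → ℝ)) :=
    { toFun v := (B v).comp (.fst ℝ _ _) (.fst ℝ _ _) + (B' v).comp (.snd ℝ _ _) (.snd ℝ _ _)
      map_add' _ _ := by ext <;> simp
      map_smul' _ _ := by ext <;> simp }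
  have hP (v) (w : (Fin c → ℝ) × (Fin d → ℝ)) : P v w w = B v w.1 w.1 + B' v w.2 w.2 := rfl
  convert of_bilinForm P
  ext v
  refine ⟨fun h w => add_nonneg (h.1 w.1) (h.2 w.2), fun h => ⟨fun w => ?_, fun w => ?_⟩⟩
  · simpa [hP] using h (w, 0)
  · simpa [hP] using h (0, w)

theorem setOf_nonneg (f : V →ₗ[ℝ] ℝ) : IsSpectrahedralCone {v | 0 ≤ f v} := by
  convert of_bilinForm (f.smulRight (LinearMap.mul ℝ ℝ)) with v
  simp only [LinearMap.smulRight_apply, LinearMap.smul_apply, LinearMap.mul_apply', smul_eq_mul]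
  exact ⟨fun h w => mul_nonneg h (mul_self_nonneg w), fun h => by simpa using h 1⟩

theorem ker [Module.Finite ℝ E] (f : V →ₗ[ℝ] E) : IsSpectrahedralCone (f.ker : Set V) := by
  let P : V →ₗ[ℝ] LinearMap.BilinForm ℝ (Module.Dual ℝ E × ℝ) :=
    { toFun v := .linMulLin (Module.Dual.eval ℝ E (f v) ∘ₗ .fst ℝ _ _) (.snd ℝ _ _)
      map_add' _ _ := by ext <;> simp
      map_smul' _ _ := by ext <;> simp }
  have hP (v) (w : Module.Dual ℝ E × ℝ) : P v w w = w.1 (f v) * w.2 := rfl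
  convert of_bilinForm P
  ext v
  rw [SetLike.mem_coe, LinearMap.mem_ker, ← Module.forall_dual_apply_eq_zero_iff ℝ, mem_ofPred_eq]
  refine ⟨fun h w => by simp [hP, h w.1], fun h φ => ?_⟩
  have h₁ := h (φ, 1)
  have h₂ := h (φ, -1)
  simp only [hP] at h₁ h₂
  linarith

theorem zero_mem {C : Set V} (hC : IsSpectrahedralCone C) : (0 : V) ∈ C := by
  obtain ⟨d, A, -, rfl⟩ := hC
  simpa using Matrix.PosSemidef.zero

theorem add_mem {C : Set V} (hC : IsSpectrahedralCone C) {v w : V} (hv : v ∈ C) (hw : w ∈ C) :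
    v + w ∈ C := by
  obtain ⟨d, A, -, rfl⟩ := hC
  simpa using hv.add hw

theorem smul_mem {C : Set V} (hC : IsSpectrahedralCone C) {c : ℝ} (hc : 0 ≤ c) {v : V}
    (hv : v ∈ C) : c • v ∈ C := by
  obtain ⟨d, A, -, rfl⟩ := hC
  simpa using hv.smul hc

end IsSpectrahedralCone
end SpectrahedralCone

section SpectrahedralShadow

section Module

variable {E : Type*} [AddCommGroup E] [Module ℝ E]

/-- A spectrahedral shadow is the image, under a linear map `π`, of the slice `ℓ = 1` of a
spectrahedral cone. Homogenizing the affine slice in this way keeps all the maps linear. -/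
def IsSpectrahedralShadow (S : Set E) : Prop :=
  ∃ (V : Type) (_ : AddCommGroup V) (_ : Module ℝ V) (C : Set V) (ℓ : V →ₗ[ℝ] ℝ) (π : V →ₗ[ℝ] E),
    IsSpectrahedralCone C ∧ S = π '' {v ∈ C | ℓ v = 1}

theorem IsSpectrahedralShadow.empty : IsSpectrahedralShadow (∅ : Set E) :=
  ⟨ℝ, _, _, {v | 0 ≤ LinearMap.id v}, 0, 0, .setOf_nonneg _, by simp⟩

theorem IsSpectrahedralShadow.inter {S T : Set E} (hS : IsSpectrahedralShadow S)
    (hT : IsSpectrahedralShadow T) : IsSpectrahedralShadow (S ∩ T) := by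
  obtain ⟨V, _, _, C, ℓ, π, hC, rfl⟩ := hS
  obtain ⟨V', _, _, C', ℓ', π', hC', rfl⟩ := hT
  let P := ((π ∘ₗ .fst ℝ V V').eqLocus (π' ∘ₗ .snd ℝ V V') : Submodule ℝ (V × V'))
  let Q := ((ℓ ∘ₗ .fst ℝ V V').eqLocus (ℓ' ∘ₗ .snd ℝ V V') : Submodule ℝ (V × V'))
  let fst : ↥(P ⊓ Q) →ₗ[ℝ] V := .fst ℝ V V' ∘ₗ (P ⊓ Q).subtype
  let snd : ↥(P ⊓ Q) →ₗ[ℝ] V' := .snd ℝ V V' ∘ₗ (P ⊓ Q).subtype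
  refine ⟨↥(P ⊓ Q), _, _, fst ⁻¹' C ∩ snd ⁻¹' C', ℓ ∘ₗ fst, π ∘ₗ fst,
    (hC.preimage fst).inter (hC'.preimage snd), Set.ext fun x => ⟨?_, ?_⟩⟩
  · rintro ⟨⟨v, ⟨hv, hℓv⟩, rfl⟩, ⟨w, ⟨hw, hℓw⟩, hvw⟩⟩
    exact ⟨⟨(v, w), hvw.symm, hℓv.trans hℓw.symm⟩, ⟨⟨hv, hw⟩, hℓv⟩, rfl⟩
  · rintro ⟨⟨⟨v, w⟩, hπ, hℓ⟩, ⟨⟨hv, hw⟩, hℓv⟩, rfl⟩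
    exact ⟨⟨v, ⟨hv, hℓv⟩, rfl⟩, ⟨w, ⟨hw, hℓ.symm.trans hℓv⟩, hπ.symm⟩⟩

end Module

section NormedSpace

variable {V E : Type*} [AddCommGroup V] [Module ℝ V] [NormedAddCommGroup E] [NormedSpace ℝ E]

theorem eq_zero_of_forall_add_smul_mem {S : Set E} (hS : Bornology.IsBounded S) {x y : E}
    (h : ∀ c : ℝ, 0 ≤ c → x + c • y ∈ S) : y = 0 := by
  obtain ⟨R, hR⟩ := hS.exists_norm_le
  by_contra hy
  have hy' : 0 < ‖y‖ := norm_pos_iff.mpr hy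
  have hR0 : 0 ≤ R := (norm_nonneg _).trans (hR _ (h 0 le_rfl))
  let c := (R + ‖x‖ + 1) / ‖y‖
  have hc : 0 ≤ c := by positivity
  have hcy : ‖c • y‖ = R + ‖x‖ + 1 := by
    rw [norm_smul, Real.norm_of_nonneg hc, div_mul_cancel₀ _ hy'.ne']
  have := norm_le_norm_add_norm_sub' (c • y) (x + c • y)
  rw [sub_add_cancel_right, norm_neg] at this
  linarith [hR _ (h c hc)]

/-- The bounded slice has no direction of recession, so `v` with `ℓ v = 0` maps to zero. -/
theorem IsSpectrahedralCone.exists_eq_smul_of_isBounded {C : Set V} (hC : IsSpectrahedralCone C)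
    {ℓ : V →ₗ[ℝ] ℝ} {π : V →ₗ[ℝ] E} (hb : Bornology.IsBounded (π '' {v ∈ C | ℓ v = 1}))
    (hne : (π '' {v ∈ C | ℓ v = 1}).Nonempty) {v : V} (hv : v ∈ C) (hℓ : 0 ≤ ℓ v) :
    ∃ a ∈ π '' {v ∈ C | ℓ v = 1}, π v = ℓ v • a := by
  obtain hℓ | hℓ := hℓ.eq_or_lt
  · obtain ⟨_, w, ⟨hw, hℓw⟩, rfl⟩ := hne
    have hzero : π v = 0 := eq_zero_of_forall_add_smul_mem hb (x := π w) fun c hc =>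
      ⟨w + c • v, ⟨hC.add_mem hw (hC.smul_mem hc hv), by simp [hℓw, ← hℓ]⟩, by simp⟩
    exact ⟨π w, ⟨w, ⟨hw, hℓw⟩, rfl⟩, by simp [hzero, ← hℓ]⟩
  · refine ⟨π ((ℓ v)⁻¹ • v), ⟨_, ⟨hC.smul_mem (by positivity) hv, ?_⟩, rfl⟩, ?_⟩
    · simp [hℓ.ne']
    · simp [smul_smul, hℓ.ne']

theorem IsSpectrahedralShadow.exists_union_subset {A B S : Set E} (hA : IsSpectrahedralShadow A)
    (hB : IsSpectrahedralShadow B) (hAS : A ⊆ S) (hBS : B ⊆ S) (hb : Bornology.IsBounded S)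
    (hconv : Convex ℝ S) : ∃ D, IsSpectrahedralShadow D ∧ A ∪ B ⊆ D ∧ D ⊆ S := by
  obtain rfl | hAne := A.eq_empty_or_nonempty
  · exact ⟨B, hB, by simp, hBS⟩
  obtain rfl | hBne := B.eq_empty_or_nonempty
  · exact ⟨A, hA, by simp, hAS⟩
  obtain ⟨V, _, _, C, ℓ, π, hC, rfl⟩ := hA
  obtain ⟨W, _, _, C', ℓ', π', hC', rfl⟩ := hB
  let fst := LinearMap.fst ℝ V W
  let snd := LinearMap.snd ℝ V W
  let K := (fst ⁻¹' C ∩ snd ⁻¹' C') ∩ ({p | 0 ≤ (ℓ ∘ₗ fst) p} ∩ {p | 0 ≤ (ℓ' ∘ₗ snd) p})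
  have hK : IsSpectrahedralCone K :=
    ((hC.preimage fst).inter (hC'.preimage snd)).inter (.inter (.setOf_nonneg _) (.setOf_nonneg _))
  refine ⟨_, ⟨V × W, _, _, K, ℓ.coprod ℓ', π.coprod π', hK, rfl⟩, union_subset ?_ ?_, ?_⟩
  · rintro _ ⟨v, ⟨hv, hℓ⟩, rfl⟩
    exact ⟨(v, 0), by simp [K, fst, snd, hv, hℓ, hC'.zero_mem], by simp⟩
  · rintro _ ⟨w, ⟨hw, hℓ⟩, rfl⟩
    exact ⟨(0, w), by simp [K, fst, snd, hw, hℓ, hC.zero_mem], by simp⟩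
  · rintro _ ⟨⟨v, w⟩, ⟨⟨⟨hv, hw⟩, hℓv, hℓw⟩, hsum⟩, rfl⟩
    obtain ⟨a, ha, hva⟩ := hC.exists_eq_smul_of_isBounded (hb.subset hAS) hAne (v := v) hv hℓv
    obtain ⟨b, hb, hwb⟩ := hC'.exists_eq_smul_of_isBounded (hb.subset hBS) hBne (v := w) hw hℓw
    rw [LinearMap.coprod_apply, hva, hwb]
    exact hconv (hAS ha) (hBS hb) hℓv hℓw hsum

end NormedSpace

section Rn

variable {n : ℕ}

theorem IsSpectrahedralShadow.exists_homogenization {E : Type*} [AddCommGroup E] [Module ℝ E]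
    [Module.Finite ℝ E] {S : Set E} (hS : IsSpectrahedralShadow S) :
    ∃ (V : Type) (_ : AddCommGroup V) (_ : Module ℝ V) (C : Set (ℝ × E × V)),
      IsSpectrahedralCone C ∧ S = {x | ∃ v, (1, x, v) ∈ C} := by
  obtain ⟨V, _, _, C, ℓ, π, hC, rfl⟩ := hS
  let t := LinearMap.fst ℝ ℝ (E × V)
  let x := LinearMap.fst ℝ E V ∘ₗ .snd ℝ ℝ (E × V)
  let v := LinearMap.snd ℝ E V ∘ₗ .snd ℝ ℝ (E × V)
  refine ⟨V, _, _, v ⁻¹' C ∩ ((ℓ ∘ₗ v - t).prod (π ∘ₗ v - x)).ker,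
    (hC.preimage v).inter (.ker _), ?_⟩
  ext y
  simp [t, x, v, sub_eq_zero, and_assoc]

theorem IsSpectrahedralShadow.isSDPRepresentable {S : Set (Rn n)} (hS : IsSpectrahedralShadow S) :
    IsSDPRepresentable S := by
  obtain ⟨V, _, _, C, ⟨d, A, hA, rfl⟩, rfl⟩ := hS.exists_homogenization
  let z := LinearMap.inr ℝ ℝ (Rn n × V) ∘ₗ .inr ℝ (Rn n) V
  let b := Module.finBasis ℝ (A ∘ₗ z).range
  let e := EuclideanSpace.basisFun (Fin n) ℝ
  have hsplit (x : Rn n) (v : V) :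
      A (1, x, v) = A (1, 0, 0) + ∑ i, x i • A (0, e i, 0) + A (0, 0, v) := by
    have hx : A (0, x, 0) = ∑ i, x i • A (0, e i, 0) := by
      simpa [e] using congrArg (A ∘ₗ .inr ℝ ℝ (Rn n × V) ∘ₗ .inl ℝ (Rn n) V) (e.sum_repr x).symm
    simp [← hx, ← map_add]
  refine ⟨_, d, A (1, 0, 0), fun i => A (0, e i, 0), fun j => b j, hA _, fun i => hA _,
    fun j => ?_, Set.ext fun x => ⟨?_, ?_⟩⟩
  · obtain ⟨v, hv⟩ := (b j).2
    exact (congrArg Matrix.IsSymm hv).mp (hA _)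
  · rintro ⟨v, hv⟩
    obtain ⟨u, hu⟩ := b.mem_submodule_iff'.mp ⟨v, rfl⟩
    refine ⟨u, ?_⟩
    rwa [← show A (0, 0, v) = _ from hu, ← hsplit]
  · rintro ⟨u, hu⟩
    obtain ⟨v, hv⟩ := b.mem_submodule_iff'.mpr ⟨u, rfl⟩
    refine ⟨v, ?_⟩
    rwa [mem_ofPred_eq, hsplit, show A (0, 0, v) = _ from hv]

end Rn

end SpectrahedralShadow

section QuadraticModule

variable {A : Type*} [CommRing A]

/-- A quadratic module of a commutative ring: a set of elements closed under addition and under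
multiplication by squares, and containing `1`. -/
structure IsQuadraticModule (M : AddSubmonoid A) : Prop where
  one_mem : 1 ∈ M
  mul_self_mul_mem (p : A) {h : A} (hh : h ∈ M) : p * p * h ∈ M

/-- The quadratic module generated by `b`, which consists of the elements `σ₀ + σ₁ b` with `σ₀`
and `σ₁` sums of squares. -/
def quadraticModule (b : A) : AddSubmonoid A :=
  .closure {h | ∃ c, (c = 1 ∨ c = b) ∧ ∃ p, h = p * p * c}

theorem isQuadraticModule_quadraticModule (b : A) : IsQuadraticModule (quadraticModule b) where
  one_mem := AddSubmonoid.subset_closure ⟨1, .inl rfl, 1, by ring⟩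
  mul_self_mul_mem p h hh := by
    induction hh using AddSubmonoid.closure_induction with
    | mem h hh =>
      obtain ⟨c, hc, q, rfl⟩ := hh
      exact AddSubmonoid.subset_closure ⟨c, hc, p * q, by ring⟩
    | zero => simp
    | add h k _ _ hh hk => rw [mul_add]; exact add_mem hh hk

theorem self_mem_quadraticModule (b : A) : b ∈ quadraticModule b :=
  AddSubmonoid.subset_closure ⟨b, .inr rfl, 1, by ring⟩

theorem IsQuadraticModule.mul_self_mem {M : AddSubmonoid A} (hM : IsQuadraticModule M) (p : A) :
    p * p ∈ M := by
  simpa using hM.mul_self_mul_mem p hM.one_mem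

variable [Algebra ℝ A] {M : AddSubmonoid A}

theorem IsQuadraticModule.algebraMap_mul_mem (hM : IsQuadraticModule M) {c : ℝ} (hc : 0 ≤ c) {h : A}
    (hh : h ∈ M) : algebraMap ℝ A c * h ∈ M := by
  rw [← Real.mul_self_sqrt hc, map_mul]
  exact hM.mul_self_mul_mem _ hh

theorem IsQuadraticModule.algebraMap_mem (hM : IsQuadraticModule M) {c : ℝ} (hc : 0 ≤ c) :
    algebraMap ℝ A c ∈ M := by
  simpa using hM.algebraMap_mul_mem hc hM.one_mem

theorem algebraMap_two_mul_inv_mul {d : ℝ} (hd : d ≠ 0) :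
    algebraMap ℝ A (2 * d)⁻¹ * (2 * algebraMap ℝ A d) = 1 := by
  rw [← map_ofNat (algebraMap ℝ A) 2, ← map_mul, ← map_mul,
    inv_mul_cancel₀ (mul_ne_zero two_ne_zero hd), map_one]

/-- `r` is infinitesimal with respect to `M` if `-c ≤ r ≤ c` for every real `c > 0`, in the preorder
whose nonnegative elements are those of `M`. -/
def IsInfinitesimal (M : AddSubmonoid A) (r : A) : Prop :=
  ∀ c : ℝ, 0 < c → algebraMap ℝ A c + r ∈ M ∧ algebraMap ℝ A c - r ∈ M

namespace IsInfinitesimal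

variable {r s : A}

theorem zero (hM : IsQuadraticModule M) : IsInfinitesimal M (0 : A) := fun c hc => by
  simpa using hM.algebraMap_mem hc.le

theorem neg (hr : IsInfinitesimal M r) : IsInfinitesimal M (-r) := fun c hc => by
  simpa [← sub_eq_add_neg, and_comm] using hr c hc

theorem add (hr : IsInfinitesimal M r) (hs : IsInfinitesimal M s) : IsInfinitesimal M (r + s) := by
  intro c hc
  obtain ⟨hr₁, hr₂⟩ := hr (c / 2) (half_pos hc)
  obtain ⟨hs₁, hs₂⟩ := hs (c / 2) (half_pos hc)
  have hhalf : algebraMap ℝ A c = algebraMap ℝ A (c / 2) + algebraMap ℝ A (c / 2) := by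
    rw [← map_add, add_halves]
  constructor
  · convert add_mem hr₁ hs₁ using 1
    rw [hhalf]; ring
  · convert add_mem hr₂ hs₂ using 1
    rw [hhalf]; ring

theorem sub (hr : IsInfinitesimal M r) (hs : IsInfinitesimal M s) : IsInfinitesimal M (r - s) := by
  rw [sub_eq_add_neg]
  exact hr.add hs.neg

theorem algebraMap_mul_of_pos (hM : IsQuadraticModule M) {k : ℝ} (hk : 0 < k)
    (hr : IsInfinitesimal M r) : IsInfinitesimal M (algebraMap ℝ A k * r) := by
  intro c hc
  have hscale : algebraMap ℝ A c = algebraMap ℝ A k * algebraMap ℝ A (c / k) := by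
    rw [← map_mul, mul_div_cancel₀ _ hk.ne']
  obtain ⟨h₁, h₂⟩ := hr (c / k) (div_pos hc hk)
  rw [hscale, ← mul_add, ← mul_sub]
  exact ⟨hM.algebraMap_mul_mem hk.le h₁, hM.algebraMap_mul_mem hk.le h₂⟩

theorem algebraMap_mul (hM : IsQuadraticModule M) (k : ℝ) (hr : IsInfinitesimal M r) :
    IsInfinitesimal M (algebraMap ℝ A k * r) := by
  obtain hk | rfl | hk := lt_trichotomy k 0
  · simpa using (hr.algebraMap_mul_of_pos hM (neg_pos.mpr hk)).neg
  · simpa using zero hM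
  · exact hr.algebraMap_mul_of_pos hM hk

theorem mul_self (hM : IsQuadraticModule M) (hr : IsInfinitesimal M r) :
    IsInfinitesimal M (r * r) := by
  intro c hc
  refine ⟨add_mem (hM.algebraMap_mem hc.le) (hM.mul_self_mem r), ?_⟩
  obtain ⟨h₁, h₂⟩ := hr (√c) (Real.sqrt_pos.mpr hc)
  have hsq : algebraMap ℝ A c = algebraMap ℝ A √c * algebraMap ℝ A √c := by
    rw [← map_mul, Real.mul_self_sqrt hc.le]
  have hinv := algebraMap_two_mul_inv_mul (A := A) (Real.sqrt_pos.mpr hc).ne'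
  -- With `d = √c`, `2 d (d² - r²) = (d - r)² (d + r) + (d + r)² (d - r)`.
  convert hM.algebraMap_mul_mem (c := (2 * √c)⁻¹) (by positivity)
    (add_mem (hM.mul_self_mul_mem (algebraMap ℝ A √c - r) h₁)
      (hM.mul_self_mul_mem (algebraMap ℝ A √c + r) h₂)) using 1
  rw [hsq]
  linear_combination (r * r - algebraMap ℝ A √c * algebraMap ℝ A √c) * hinv

theorem mul (hM : IsQuadraticModule M) (hr : IsInfinitesimal M r) (hs : IsInfinitesimal M s) :
    IsInfinitesimal M (r * s) := by
  have hfour : algebraMap ℝ A 4⁻¹ * 4 = 1 := by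
    rw [← map_ofNat (algebraMap ℝ A) 4, ← map_mul]
    norm_num
  convert algebraMap_mul hM 4⁻¹ (((hr.add hs).mul_self hM).sub ((hr.sub hs).mul_self hM)) using 1
  linear_combination (-(r * s)) * hfour

theorem of_mul_self_sub (hM : IsQuadraticModule M)
    (h : ∀ c : ℝ, 0 < c → algebraMap ℝ A (c ^ 2) - r * r ∈ M) : IsInfinitesimal M r := by
  intro c hc
  have hinv := algebraMap_two_mul_inv_mul (A := A) hc.ne'
  have hscale := fun {p} => hM.algebraMap_mul_mem (h := p) (show 0 ≤ (2 * c)⁻¹ by positivity)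
  -- `2 c (c ± r) = (c² - r²) + (c ± r)²`.
  constructor
  · convert hscale (add_mem (h c hc) (hM.mul_self_mem (algebraMap ℝ A c + r))) using 1
    rw [map_pow]
    linear_combination (-(algebraMap ℝ A c + r)) * hinv
  · convert hscale (add_mem (h c hc) (hM.mul_self_mem (algebraMap ℝ A c - r))) using 1
    rw [map_pow]
    linear_combination (-(algebraMap ℝ A c - r)) * hinv

theorem sub_C_eval {σ : Type*} {M : AddSubmonoid (MvPolynomial σ ℝ)} (hM : IsQuadraticModule M)
    {u : σ → ℝ} (hX : ∀ i, IsInfinitesimal M (X i - C (u i))) (p : MvPolynomial σ ℝ) :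
    IsInfinitesimal M (p - C (eval u p)) := by
  induction p using MvPolynomial.induction_on with
  | C a => simpa using zero hM
  | add p q hp hq =>
    convert hp.add hq using 1
    rw [eval_add, map_add]
    ring
  | mul_X p i hp =>
    convert (mul hM hp (hX i)).add
      ((algebraMap_mul hM (u i) hp).add (algebraMap_mul hM (eval u p) (hX i))) using 1
    rw [eval_mul, eval_X, map_mul, algebraMap_eq]
    ring

end IsInfinitesimal

end QuadraticModule

section MatrixQuadraticModule

open Matrix

open scoped MatrixOrder in
theorem exists_posSemidef_sub_smul_one {ι : Type*} [Finite ι] [DecidableEq ι] {G : Matrix ι ι ℝ}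
    (hG : G.PosDef) : ∃ ε : ℝ, 0 < ε ∧ (G - ε • 1).PosSemidef := by
  have := Fintype.ofFinite ι
  cases isEmpty_or_nonempty ι
  · exact ⟨1, one_pos, by rw [Subsingleton.elim (G - _) 0]; exact PosSemidef.zero⟩
  · obtain ⟨ε, hε, hle⟩ := (CFC.exists_pos_algebraMap_le_iff hG.isHermitian.isSelfAdjoint).mpr
      fun x hx => hG.isStrictlyPositive.spectrum_pos hx
    exact ⟨ε, hε, by
      rwa [Algebra.algebraMap_eq_smul_one, ← sub_nonneg, nonneg_iff_posSemidef] at hle⟩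

variable {A ι : Type*} [CommRing A]

theorem sum_sum_single_add_single [Fintype ι] [DecidableEq ι] :
    ∑ i, ∑ j, (single i i 1 + single j j 1) = (2 * Fintype.card ι : A) • (1 : Matrix ι ι A) := by
  simp only [Finset.sum_add_distrib, Finset.sum_const, Finset.card_univ, ← Finset.smul_sum,
    sum_single_one, ← two_mul, mul_smul, ofNat_smul_eq_nsmul, Nat.cast_smul_eq_nsmul, two_nsmul]

theorem sum_sum_smul_single_add_single [Fintype ι] [DecidableEq ι] {R : Matrix ι ι A}
    (hR : R.IsSymm) : ∑ i, ∑ j, R i j • (single i j 1 + single j i 1) = (2 : A) • R := by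
  simp only [smul_add, smul_single, smul_eq_mul, mul_one, Finset.sum_add_distrib, two_smul]
  congr 1
  · exact (matrix_eq_sum_single R).symm
  · rw [Finset.sum_comm]
    conv_rhs => rw [← hR.eq, matrix_eq_sum_single Rᵀ]
    rfl

/-- The matrices `∑ hₖ wₖ wₖᵀ` with `hₖ ∈ M`: the matrix analogue of a quadratic module. -/
def matrixQuadraticModule (ι : Type*) (M : AddSubmonoid A) : AddSubmonoid (Matrix ι ι A) :=
  .closure {H | ∃ h ∈ M, ∃ w : ι → A, H = h • vecMulVec w w}

variable {M : AddSubmonoid A}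

theorem smul_vecMulVec_mem_matrixQuadraticModule {h : A} (hh : h ∈ M) (w : ι → A) :
    h • vecMulVec w w ∈ matrixQuadraticModule ι M :=
  AddSubmonoid.subset_closure ⟨h, hh, w, rfl⟩

theorem vecMulVec_mem_matrixQuadraticModule (hM : IsQuadraticModule M) (w : ι → A) :
    vecMulVec w w ∈ matrixQuadraticModule ι M := by
  simpa using smul_vecMulVec_mem_matrixQuadraticModule hM.one_mem w

variable [Algebra ℝ A]

theorem map_algebraMap_mem_matrixQuadraticModule [Finite ι] (hM : IsQuadraticModule M)
    {G : Matrix ι ι ℝ} (hG : G.PosSemidef) :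
    G.map (algebraMap ℝ A) ∈ matrixQuadraticModule ι M := by
  obtain ⟨m, v, rfl⟩ := posSemidef_iff_eq_sum_vecMulVec.mp hG
  have hmap : (∑ k, vecMulVec (v k) (star (v k))).map (algebraMap ℝ A) =
      ∑ k, vecMulVec (algebraMap ℝ A ∘ v k) (algebraMap ℝ A ∘ v k) := by
    ext i j
    simp [Matrix.sum_apply, vecMulVec_apply]
  rw [hmap]
  exact sum_mem fun k _ => vecMulVec_mem_matrixQuadraticModule hM _

theorem algebraMap_two_inv_mul_two : algebraMap ℝ A 2⁻¹ * 2 = 1 := by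
  rw [← map_ofNat (algebraMap ℝ A) 2, ← map_mul, inv_mul_cancel₀ two_ne_zero, map_one]

theorem IsInfinitesimal.smul_vecMulVec_add_mem {r : A} (hM : IsQuadraticModule M)
    (hr : IsInfinitesimal M r) {ε : ℝ} (hε : 0 < ε) (v w : ι → A) :
    algebraMap ℝ A ε • (vecMulVec v v + vecMulVec w w) + r • (vecMulVec v w + vecMulVec w v) ∈
      matrixQuadraticModule ι M := by
  obtain ⟨h₁, h₂⟩ := hr ε hε
  have hscale := fun {p} => hM.algebraMap_mul_mem (h := p) (show (0 : ℝ) ≤ 2⁻¹ by positivity)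
  -- Twice this matrix is `(ε + r) (v + w) (v + w)ᵀ + (ε - r) (v - w) (v - w)ᵀ`.
  convert add_mem (smul_vecMulVec_mem_matrixQuadraticModule (hscale h₁) (v + w))
    (smul_vecMulVec_mem_matrixQuadraticModule (hscale h₂) (v - w)) using 1
  ext i j
  simp only [Matrix.add_apply, Matrix.smul_apply, vecMulVec_apply, smul_eq_mul, Pi.add_apply,
    Pi.sub_apply]
  linear_combination (-(algebraMap ℝ A ε * (v i * v j + w i * w j) +
    r * (v i * w j + w i * v j))) * algebraMap_two_inv_mul_two (A := A)

theorem smul_one_add_mem_matrixQuadraticModule [Finite ι] [DecidableEq ι]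
    (hM : IsQuadraticModule M) {R : Matrix ι ι A} (hsymm : R.IsSymm)
    (hR : ∀ i j, IsInfinitesimal M (R i j)) {ε : ℝ} (hε : 0 < ε) :
    algebraMap ℝ A ε • 1 + R ∈ matrixQuadraticModule ι M := by
  have := Fintype.ofFinite ι
  cases isEmpty_or_nonempty ι
  · rw [Subsingleton.elim (_ + R) 0]
    exact zero_mem _
  have hcard : (0 : ℝ) < 2 * Fintype.card ι := by positivity
  have hpair (i j) := ((hR i j).algebraMap_mul hM 2⁻¹).smul_vecMulVec_add_mem hM
    (div_pos hε hcard) (Pi.single i 1) (Pi.single j 1)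
  convert sum_mem fun i (_ : i ∈ Finset.univ) => sum_mem fun j (_ : j ∈ Finset.univ) => hpair i j
  simp only [← single_eq_single_vecMulVec_single, Finset.sum_add_distrib, ← Finset.smul_sum,
    mul_smul]
  have hε' : algebraMap ℝ A (ε / (2 * Fintype.card ι)) * (2 * Fintype.card ι) =
      algebraMap ℝ A ε := by
    rw [← map_ofNat (algebraMap ℝ A) 2, ← map_natCast (algebraMap ℝ A), ← map_mul, ← map_mul,
      div_mul_cancel₀ _ hcard.ne']
  rw [sum_sum_smul_single_add_single hsymm, ← Finset.sum_add_distrib]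
  simp only [← Finset.sum_add_distrib]
  rw [sum_sum_single_add_single, smul_smul, smul_smul, hε', algebraMap_two_inv_mul_two, one_smul]

theorem mem_matrixQuadraticModule_of_posDef [Finite ι] (hM : IsQuadraticModule M)
    {H : Matrix ι ι A} {G : Matrix ι ι ℝ} (hH : H.IsSymm) (hG : G.PosDef)
    (h : ∀ i j, IsInfinitesimal M (H i j - algebraMap ℝ A (G i j))) :
    H ∈ matrixQuadraticModule ι M := by
  classical
  obtain ⟨ε, hε, hGε⟩ := exists_posSemidef_sub_smul_one hG
  have hsymm : (H - G.map (algebraMap ℝ A)).IsSymm :=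
    hH.sub (IsSymm.map (by simpa using hG.isHermitian) _)
  convert add_mem (map_algebraMap_mem_matrixQuadraticModule hM hGε)
    (smul_one_add_mem_matrixQuadraticModule hM hsymm h hε) using 1
  ext i j
  obtain rfl | hij := eq_or_ne i j
  · simp [Algebra.smul_def, ← add_assoc]
  · simp [hij]

end MatrixQuadraticModule

section Germs

open Topology

variable {n : ℕ} {u : Rn n}

/-- The polynomials which lie in the quadratic module of every sufficiently small ball centred
at `u`. -/
def ballGerm (u : Rn n) : AddSubmonoid (MvPolynomial (Fin n) ℝ) where
  carrier := {h | ∀ᶠ δ in 𝓝[>] (0 : ℝ), h ∈ quadraticModule (ballPoly u δ)}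
  zero_mem' := by simp
  add_mem' hf hg := by
    rw [mem_ofPred_eq] at hf hg ⊢
    filter_upwards [hf, hg] with δ hf hg using add_mem hf hg

theorem mem_ballGerm {h : MvPolynomial (Fin n) ℝ} :
    h ∈ ballGerm u ↔ ∀ᶠ δ in 𝓝[>] (0 : ℝ), h ∈ quadraticModule (ballPoly u δ) :=
  Iff.rfl

theorem isQuadraticModule_ballGerm (u : Rn n) : IsQuadraticModule (ballGerm u) where
  one_mem := mem_ballGerm.mpr <| .of_forall fun _ => (isQuadraticModule_quadraticModule _).one_mem
  mul_self_mul_mem p _ hh := mem_ballGerm.mpr <| (mem_ballGerm.mp hh).mono fun _ =>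
    (isQuadraticModule_quadraticModule _).mul_self_mul_mem p

theorem isInfinitesimal_X_sub_C (u : Rn n) (i : Fin n) :
    IsInfinitesimal (ballGerm u) (X i - C (u i)) := by
  refine .of_mul_self_sub (isQuadraticModule_ballGerm u) fun c hc => ?_
  rw [mem_ballGerm]
  filter_upwards [Ioo_mem_nhdsGT hc] with δ hδ
  have hM := isQuadraticModule_quadraticModule (ballPoly u δ)
  have hnonneg : 0 ≤ c ^ 2 - δ ^ 2 := sub_nonneg.mpr (pow_le_pow_left₀ hδ.1.le hδ.2.le 2)
  convert add_mem (add_mem (hM.algebraMap_mem hnonneg) (self_mem_quadraticModule _))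
    (sum_mem fun j (_ : j ∈ Finset.univ.erase i) => hM.mul_self_mem (X j - C (u j))) using 1
  simp only [ballPoly, algebraMap_eq, map_sub, map_pow, ← pow_two,
    ← Finset.add_sum_erase _ _ (Finset.mem_univ i)]
  ring

theorem matrixQuadraticModule_ballGerm_eventually {ι : Type*}
    {H : Matrix ι ι (MvPolynomial (Fin n) ℝ)} (hH : H ∈ matrixQuadraticModule ι (ballGerm u)) :
    ∀ᶠ δ in 𝓝[>] (0 : ℝ), H ∈ matrixQuadraticModule ι (quadraticModule (ballPoly u δ)) := by
  induction hH using AddSubmonoid.closure_induction with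
  | mem H hH =>
    obtain ⟨h, hh, w, rfl⟩ := hH
    exact (mem_ballGerm.mp hh).mono fun δ hh => smul_vecMulVec_mem_matrixQuadraticModule hh w
  | zero => exact .of_forall fun _ => zero_mem _
  | add H K _ _ hH hK => filter_upwards [hH, hK] with δ hH hK using add_mem hH hK

theorem mem_matrixQuadraticModule_ballGerm_of_posDef {ι : Type*} [Finite ι]
    {H : Matrix ι ι (MvPolynomial (Fin n) ℝ)} (hsymm : H.IsSymm)
    (hpos : (H.map (eval fun i => u i)).PosDef) : H ∈ matrixQuadraticModule ι (ballGerm u) :=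
  mem_matrixQuadraticModule_of_posDef (isQuadraticModule_ballGerm u) hsymm hpos fun i j =>
    .sub_C_eval (isQuadraticModule_ballGerm u) (isInfinitesimal_X_sub_C u) (H i j)

end Germs

section Finsler

open Matrix

variable {ι : Type*} [Fintype ι] {A : Matrix ι ι ℝ} {l : ι → ℝ}

theorem dotProduct_smul_mulVec_smul (A : Matrix ι ι ℝ) (c : ℝ) (v : ι → ℝ) :
    (c • v) ⬝ᵥ A *ᵥ (c • v) = c ^ 2 * (v ⬝ᵥ A *ᵥ v) := by
  rw [mulVec_smul, smul_dotProduct, dotProduct_smul, smul_eq_mul, smul_eq_mul]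
  ring

theorem posDef_of_forall_mem_sphere (hA : A.IsHermitian)
    (h : ∀ v ∈ sphere (0 : ι → ℝ) 1, 0 < v ⬝ᵥ A *ᵥ v) : A.PosDef := by
  refine .of_dotProduct_mulVec_pos hA fun v hv => ?_
  have hpos := h (‖v‖⁻¹ • v) (by simp [norm_smul, hv])
  rw [dotProduct_smul_mulVec_smul] at hpos
  exact pos_of_mul_pos_right hpos (by positivity)

theorem dotProduct_add_smul_vecMulVec_mulVec (A : Matrix ι ι ℝ) (l : ι → ℝ) (M : ℝ) (v : ι → ℝ) :
    v ⬝ᵥ (A + M • vecMulVec l l) *ᵥ v = v ⬝ᵥ A *ᵥ v + M * (l ⬝ᵥ v) ^ 2 := by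
  rw [add_mulVec, dotProduct_add, smul_mulVec, dotProduct_smul, vecMulVec_mulVec,
    op_smul_eq_smul, dotProduct_smul, dotProduct_comm v l, smul_eq_mul, smul_eq_mul]
  ring

theorem exists_posDef_add_smul_vecMulVec (hA : A.IsHermitian)
    (h : ∀ v ≠ 0, l ⬝ᵥ v = 0 → 0 < v ⬝ᵥ A *ᵥ v) : ∃ M : ℝ, (A + M • vecMulVec l l).PosDef := by
  have hq : Continuous fun v => v ⬝ᵥ A *ᵥ v := by fun_prop
  have hl : Continuous fun v => l ⬝ᵥ v := by fun_prop
  set K : Set (ι → ℝ) := sphere 0 1 ∩ {v | v ⬝ᵥ A *ᵥ v ≤ 0}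
  have hK : IsCompact K := (isCompact_sphere 0 1).inter_right (isClosed_le hq continuous_const)
  have hne : ∀ v ∈ K, (l ⬝ᵥ v) ^ 2 ≠ 0 := fun v hv =>
    pow_ne_zero 2 fun hlv => hv.2.not_gt (h v (ne_zero_of_mem_unit_sphere ⟨v, hv.1⟩) hlv)
  obtain ⟨M, hM⟩ := hK.bddAbove_image (hq.neg.continuousOn.div (hl.pow 2).continuousOn hne)
  refine ⟨max M 0 + 1, posDef_of_forall_mem_sphere ?_ fun v hv => ?_⟩
  · exact hA.add (by ext i j; simp [vecMulVec_apply, mul_comm])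
  rw [dotProduct_add_smul_vecMulVec_mulVec]
  by_cases hneg : v ⬝ᵥ A *ᵥ v ≤ 0
  · have hlv : 0 < (l ⬝ᵥ v) ^ 2 := (sq_nonneg _).lt_of_ne' (hne v ⟨hv, hneg⟩)
    have hle : -(v ⬝ᵥ A *ᵥ v) ≤ M * (l ⬝ᵥ v) ^ 2 :=
      (div_le_iff₀ hlv).mp (hM (mem_image_of_mem _ ⟨hv, hneg⟩))
    nlinarith [mul_le_mul_of_nonneg_right (le_max_left M 0) hlv.le]
  · have := not_le.mp hneg
    positivity

end Finsler

section Hessian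

open Matrix

variable {σ : Type*} {p : MvPolynomial σ ℝ}

theorem pderiv_pderiv_comm (i j : σ) (p : MvPolynomial σ ℝ) :
    pderiv i (pderiv j p) = pderiv j (pderiv i p) := by
  classical
  have hcomm : ⁅pderiv (R := ℝ) i, pderiv j⁆ = 0 := derivation_ext fun k => by
    rw [Derivation.commutator_apply, pderiv_X, pderiv_X]
    simp only [Pi.single_apply]
    split_ifs <;> simp
  simpa [Derivation.commutator_apply, sub_eq_zero] using congrArg (· p) hcomm

/-- The matrix of second partial derivatives of a polynomial, as a matrix of polynomials. -/
def hessian : MvPolynomial σ ℝ →ₗ[ℝ] Matrix σ σ (MvPolynomial σ ℝ) where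
  toFun p := .of fun i j => pderiv i (pderiv j p)
  map_add' p q := by ext; simp
  map_smul' c p := by ext; simp

theorem hessian_apply (i j : σ) : hessian p i j = pderiv i (pderiv j p) := rfl

theorem isSymm_hessian (p : MvPolynomial σ ℝ) : (hessian p).IsSymm :=
  IsSymm.ext fun i j => pderiv_pderiv_comm j i p

theorem hessian_mul_self (p : MvPolynomial σ ℝ) : hessian (p * p) =
    (2 : ℝ) • (p • hessian p + vecMulVec (fun i => pderiv i p) fun i => pderiv i p) := by
  ext1 i j
  simp only [hessian_apply, Matrix.smul_apply, Matrix.add_apply, vecMulVec_apply, pderiv_mul,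
    map_add, two_smul, smul_eq_mul]
  ring

end Hessian

section LocalCertificate

open Matrix Topology

variable {n : ℕ} {u : Rn n} {g : MvPolynomial (Fin n) ℝ}

theorem hessian_map_eval (g : MvPolynomial (Fin n) ℝ) (u : Rn n) :
    (hessian g).map (eval fun i => u i) = phess g u := rfl

theorem isHermitian_phess (g : MvPolynomial (Fin n) ℝ) (u : Rn n) : (phess g u).IsHermitian := by
  rw [← hessian_map_eval, isHermitian_iff_isSymm]
  exact (isSymm_hessian g).map _

theorem continuous_peval (g : MvPolynomial (Fin n) ℝ) : Continuous (peval g) := by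
  have := MvPolynomial.continuous_eval g
  unfold peval
  fun_prop

theorem SosConcave.neg_hessian_mem {M : AddSubmonoid (MvPolynomial (Fin n) ℝ)}
    (hM : IsQuadraticModule M) (hg : SosConcave g) :
    -hessian g ∈ matrixQuadraticModule (Fin n) M := by
  obtain ⟨k, W, hW⟩ := hg
  have hsum : -hessian g = ∑ l, vecMulVec (W l) (W l) := by
    ext1 i j
    simp only [Matrix.neg_apply, hessian_apply, hW, Matrix.sum_apply, vecMulVec_apply]
  rw [hsum]
  exact sum_mem fun l _ => vecMulVec_mem_matrixQuadraticModule hM (W l)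

theorem StrictlyQuasiConcaveAt.pos_of_dotProduct_eq_zero (hg : StrictlyQuasiConcaveAt g u)
    {v : Fin n → ℝ} (hv : v ≠ 0) (hgv : pgrad g u ⬝ᵥ v = 0) : 0 < v ⬝ᵥ (-phess g u) *ᵥ v := by
  obtain ⟨-, hpos⟩ | ⟨-, hpos⟩ := hg
  · simpa [dotProduct, mulVec, Finset.mul_sum, neg_mulVec, mul_assoc] using hpos v hv hgv
  · exact hpos.dotProduct_mulVec_pos hv

theorem neg_hessian_sub_smul_mul_self_map_eval (hgu : peval g u = 0) (M : ℝ) :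
    (-hessian (g - (M / 2) • (g * g))).map (eval fun i => u i) =
      -phess g u + M • vecMulVec (pgrad g u) (pgrad g u) := by
  have hgu' : eval (fun i => u i) g = 0 := hgu
  ext i j
  simp only [map_sub, map_smul, hessian_mul_self, Matrix.map_apply, Matrix.neg_apply,
    Matrix.sub_apply, Matrix.smul_apply, Matrix.add_apply, vecMulVec_apply, smul_eq_mul, map_neg,
    smul_eval, map_add, map_mul, hgu', hessian_apply, phess, pgrad, Matrix.of_apply]
  ring

theorem StrictlyQuasiConcaveAt.exists_neg_hessian_mem (hg : StrictlyQuasiConcaveAt g u)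
    (hgu : peval g u = 0) : ∃ f, -hessian f ∈ matrixQuadraticModule (Fin n) (ballGerm u) ∧
      ∀ᶠ x in 𝓝 u, 0 ≤ peval f x ↔ 0 ≤ peval g x := by
  obtain ⟨M, hM⟩ := exists_posDef_add_smul_vecMulVec (isHermitian_phess g u).neg
    fun v hv => hg.pos_of_dotProduct_eq_zero hv
  refine ⟨g - (M / 2) • (g * g), mem_matrixQuadraticModule_ballGerm_of_posDef
    (isSymm_hessian _).neg ?_, ?_⟩
  · rwa [neg_hessian_sub_smul_mul_self_map_eval hgu]
  · have hpos : ∀ᶠ x in 𝓝 u, 0 < 1 - M / 2 * peval g x :=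
      (continuous_const.sub (continuous_const.mul (continuous_peval g))).continuousAt.eventually
        (lt_mem_nhds (by simp [hgu]))
    filter_upwards [hpos] with x hx
    have hfactor : peval (g - (M / 2) • (g * g)) x = (1 - M / 2 * peval g x) * peval g x := by
      simp only [peval, map_sub, smul_eval, map_mul]
      ring
    rw [hfactor, mul_nonneg_iff_of_pos_left hx]

end LocalCertificate

section Homothety

variable {σ : Type*} (a : σ → ℝ) (t : ℝ)

/-- Substitution of `a + t (x - a)` for the variable `x`, the homothety with centre `a` and
ratio `t`. -/
def homothetySubst : MvPolynomial σ ℝ →ₐ[ℝ] MvPolynomial σ ℝ :=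
  aeval fun i => C (a i) + C t * (X i - C (a i))

@[simp]
theorem homothetySubst_C (c : ℝ) : homothetySubst a t (C c) = C c := algHom_C _ c

@[simp]
theorem homothetySubst_X (i : σ) :
    homothetySubst a t (X i) = C (a i) + C t * (X i - C (a i)) := aeval_X _ i

theorem homothetySubst_zero (p : MvPolynomial σ ℝ) : homothetySubst a 0 p = C (eval a p) := by
  induction p using MvPolynomial.induction_on with
  | C c => simp
  | add p q hp hq => simp [hp, hq]
  | mul_X p i hp => simp [hp]

theorem homothetySubst_one (p : MvPolynomial σ ℝ) : homothetySubst a 1 p = p := by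
  induction p using MvPolynomial.induction_on with
  | C c => simp
  | add p q hp hq => simp [hp, hq]
  | mul_X p i hp => simp [hp]

theorem totalDegree_X_sub_C_le (i : σ) (c : ℝ) : (X i - C c : MvPolynomial σ ℝ).totalDegree ≤ 1 :=
  (totalDegree_sub_C_le _ _).trans_eq (totalDegree_X i)

theorem totalDegree_aeval_le {τ : Type*} {f : σ → MvPolynomial τ ℝ}
    (hf : ∀ i, (f i).totalDegree ≤ 1) (p : MvPolynomial σ ℝ) :
    (aeval f p).totalDegree ≤ p.totalDegree := by
  rw [aeval_def, eval₂_eq]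
  refine totalDegree_finsetSum_le fun d hd => (totalDegree_mul _ _).trans ?_
  rw [algebraMap_eq, totalDegree_C, zero_add]
  refine (totalDegree_finsetProd _ _).trans (le_trans ?_ (le_totalDegree hd))
  exact Finset.sum_le_sum fun i _ => (totalDegree_pow _ _).trans (mul_le_of_le_one_right' (hf i))

theorem totalDegree_homothetySubst_le (p : MvPolynomial σ ℝ) :
    (homothetySubst a t p).totalDegree ≤ p.totalDegree := by
  refine totalDegree_aeval_le (fun i => ?_) p
  refine (totalDegree_add _ _).trans (max_le (by simp) ?_)
  exact (totalDegree_mul _ _).trans (by simpa using totalDegree_X_sub_C_le i (a i))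

theorem dual_C_mul (L : Module.Dual ℝ (MvPolynomial σ ℝ)) (c : ℝ) (p : MvPolynomial σ ℝ) :
    L (C c * p) = c * L p := by
  rw [C_mul', map_smul, smul_eq_mul]

theorem sum_X_sub_C_mul_homothetySubst_pderiv_mul_X [Fintype σ] (p : MvPolynomial σ ℝ) (j : σ) :
    ∑ i, (X i - C (a i)) * homothetySubst a t (pderiv i (p * X j)) =
      (X j - C (a j)) * homothetySubst a t p + (C (a j) + C t * (X j - C (a j))) *
        ∑ i, (X i - C (a i)) * homothetySubst a t (pderiv i p) := by
  classical
  have hprod (i) : (X i - C (a i)) * homothetySubst a t (pderiv i (p * X j)) =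
      (if i = j then (X j - C (a j)) * homothetySubst a t p else 0) +
        (C (a j) + C t * (X j - C (a j))) *
          ((X i - C (a i)) * homothetySubst a t (pderiv i p)) := by
    rw [pderiv_mul, pderiv_X, Pi.single_apply, map_add, map_mul, map_mul, homothetySubst_X]
    obtain rfl | hij := eq_or_ne i j
    · rw [if_pos rfl, if_pos rfl, map_one]
      ring
    · rw [if_neg hij.symm, if_neg hij, map_zero]
      ring
  simp only [hprod, Finset.sum_add_distrib, Finset.sum_ite_eq', Finset.mem_univ, if_true,
    ← Finset.mul_sum]

theorem hasDerivAt_dual_mul_homothetySubst [Fintype σ] (L : Module.Dual ℝ (MvPolynomial σ ℝ))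
    (p q : MvPolynomial σ ℝ) : HasDerivAt (fun t => L (q * homothetySubst a t p))
      (L (q * ∑ i, (X i - C (a i)) * homothetySubst a t (pderiv i p))) t := by
  induction p using MvPolynomial.induction_on generalizing q with
  | C c => simpa using hasDerivAt_const t (L (q * C c))
  | add p r hp hr =>
    simpa only [map_add, mul_add, Finset.sum_add_distrib] using (hp q).fun_add (hr q)
  | mul_X p j hp =>
    have hsplit (r : MvPolynomial σ ℝ) (s) : L (q * ((C (a j) + C s * (X j - C (a j))) * r)) =
        a j * L (q * r) + s * L (q * (X j - C (a j)) * r) := by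
      rw [← dual_C_mul, ← dual_C_mul, ← map_add]
      congr 1
      ring
    simp only [sum_X_sub_C_mul_homothetySubst_pderiv_mul_X, mul_add q, map_add L, hsplit,
      map_mul, homothetySubst_X, mul_comm (homothetySubst a _ p)]
    refine (((hp q).const_mul (a j)).fun_add
      ((hasDerivAt_id t).fun_mul (hp (q * (X j - C (a j)))))).congr_deriv ?_
    simp only [id, mul_assoc]
    ring

end Homothety

section TruncatedQuadraticModule

variable {σ : Type*} {b : MvPolynomial σ ℝ} {D E : ℕ}

/-- The part of `quadraticModule b` generated by squares of polynomials of degree at most `D`. -/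
def truncatedQuadraticModule (b : MvPolynomial σ ℝ) (D : ℕ) : AddSubmonoid (MvPolynomial σ ℝ) :=
  .closure {h | ∃ c, (c = 1 ∨ c = b) ∧ ∃ p : MvPolynomial σ ℝ, p.totalDegree ≤ D ∧ h = p * p * c}

theorem mul_self_mem_truncatedQuadraticModule {p : MvPolynomial σ ℝ} (hp : p.totalDegree ≤ D) :
    p * p ∈ truncatedQuadraticModule b D :=
  AddSubmonoid.subset_closure ⟨1, .inl rfl, p, hp, by ring⟩

theorem mul_self_mul_mem_truncatedQuadraticModule {p : MvPolynomial σ ℝ} (hp : p.totalDegree ≤ D) :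
    p * p * b ∈ truncatedQuadraticModule b D :=
  AddSubmonoid.subset_closure ⟨b, .inr rfl, p, hp, rfl⟩

theorem truncatedQuadraticModule_mono (hDE : D ≤ E) :
    truncatedQuadraticModule b D ≤ truncatedQuadraticModule b E :=
  AddSubmonoid.closure_mono fun _ ⟨c, hc, p, hp, h⟩ => ⟨c, hc, p, hp.trans hDE, h⟩

theorem C_mul_mem_truncatedQuadraticModule {c : ℝ} (hc : 0 ≤ c) {h : MvPolynomial σ ℝ}
    (hh : h ∈ truncatedQuadraticModule b D) : C c * h ∈ truncatedQuadraticModule b D := by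
  induction hh using AddSubmonoid.closure_induction with
  | mem h hh =>
    obtain ⟨e, he, p, hp, rfl⟩ := hh
    refine AddSubmonoid.subset_closure ⟨e, he, C √c * p, ?_, ?_⟩
    · exact (totalDegree_mul _ _).trans (by simpa using hp)
    · rw [← Real.mul_self_sqrt hc, Real.sqrt_mul_self (Real.sqrt_nonneg c), C_mul]
      ring
  | zero => simp
  | add h k _ _ hh hk => rw [mul_add]; exact add_mem hh hk

theorem eval_nonneg_of_mem_truncatedQuadraticModule {x : σ → ℝ} (hb : 0 ≤ eval x b)
    {h : MvPolynomial σ ℝ} (hh : h ∈ truncatedQuadraticModule b D) : 0 ≤ eval x h := by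
  induction hh using AddSubmonoid.closure_induction with
  | mem h hh =>
    obtain ⟨c, rfl | rfl, p, -, rfl⟩ := hh
    · simpa using mul_self_nonneg _
    · rw [map_mul, map_mul]
      exact mul_nonneg (mul_self_nonneg _) hb
  | zero => simp
  | add h k _ _ hh hk => rw [map_add]; exact add_nonneg hh hk

theorem isSpectrahedralCone_setOf_dual_mul_self_mul_nonneg [Finite σ] (c : MvPolynomial σ ℝ)
    (D : ℕ) : IsSpectrahedralCone {L : Module.Dual ℝ (MvPolynomial σ ℝ) |
      ∀ p : MvPolynomial σ ℝ, p.totalDegree ≤ D → 0 ≤ L (p * p * c)} := by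
  let W := restrictTotalDegree σ ℝ D
  let B : Module.Dual ℝ (MvPolynomial σ ℝ) →ₗ[ℝ] LinearMap.BilinForm ℝ W :=
    { toFun L := ((LinearMap.mul ℝ _).compr₂ (L ∘ₗ LinearMap.mulRight ℝ c)).domRestrict₁₂ W W
      map_add' _ _ := by ext; simp [LinearMap.domRestrict₁₂_apply]
      map_smul' _ _ := by ext; simp [LinearMap.domRestrict₁₂_apply] }
  convert IsSpectrahedralCone.of_bilinForm B with L
  simp [B, W, mem_restrictTotalDegree, LinearMap.domRestrict₁₂_apply]

theorem isSpectrahedralCone_dual_truncatedQuadraticModule [Finite σ] (b : MvPolynomial σ ℝ)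
    (D : ℕ) : IsSpectrahedralCone {L : Module.Dual ℝ (MvPolynomial σ ℝ) |
      ∀ h ∈ truncatedQuadraticModule b D, 0 ≤ L h} := by
  convert (isSpectrahedralCone_setOf_dual_mul_self_mul_nonneg 1 D).inter
    (isSpectrahedralCone_setOf_dual_mul_self_mul_nonneg b D)
  ext L
  constructor
  · exact fun h => ⟨fun p hp => h _ (by simpa using mul_self_mem_truncatedQuadraticModule hp),
      fun p hp => h _ (mul_self_mul_mem_truncatedQuadraticModule hp)⟩
  · rintro ⟨h₁, h₂⟩ h hh
    induction hh using AddSubmonoid.closure_induction with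
    | mem h hh =>
      obtain ⟨c, rfl | rfl, p, hp, rfl⟩ := hh
      · exact h₁ p hp
      · exact h₂ p hp
    | zero => simp
    | add h k _ _ hh hk => rw [map_add]; exact add_nonneg hh hk

end TruncatedQuadraticModule

section BallPoly

variable {n : ℕ} {u : Rn n} {δ : ℝ} {D : ℕ}

theorem eval_ballPoly_nonneg_iff (hδ : 0 ≤ δ) (x : Rn n) :
    0 ≤ eval (fun i => x i) (ballPoly u δ) ↔ x ∈ closedBall u δ := by
  rw [mem_closedBall, EuclideanSpace.dist_eq, Real.sqrt_le_left hδ]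
  simp only [ballPoly, map_sub, map_sum, map_pow, eval_X, eval_C, Real.dist_eq, sq_abs]
  exact sub_nonneg

theorem C_eval_ballPoly (u : Rn n) (δ : ℝ) (a : Fin n → ℝ) :
    C (eval a (ballPoly u δ)) = ballPoly u δ + ∑ i, (C (2 * (a i - u i)) * (X i - C (a i)) +
      (X i - C (a i)) * (X i - C (a i))) := by
  simp only [ballPoly, map_sub, map_sum, map_pow, eval_X, eval_C]
  rw [sub_add, sub_right_inj, ← Finset.sum_sub_distrib]
  refine Finset.sum_congr rfl fun i _ => ?_
  rw [C_mul, C_sub, show (C 2 : MvPolynomial (Fin n) ℝ) = 2 from rfl]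
  ring

theorem homothetySubst_ballPoly (u : Rn n) (δ : ℝ) (a : Fin n → ℝ) (t : ℝ) :
    homothetySubst a t (ballPoly u δ) = C (1 - t) * C (eval a (ballPoly u δ)) +
      C t * ballPoly u δ + ∑ i, C (t * (1 - t)) * ((X i - C (a i)) * (X i - C (a i))) := by
  have hterm (i) : ((C (a i) : MvPolynomial (Fin n) ℝ) + C t * (X i - C (a i)) - C (u i)) ^ 2 =
      (1 - C t) * (C (a i) - C (u i)) ^ 2 + C t * (X i - C (u i)) ^ 2 -
        C t * (1 - C t) * ((X i - C (a i)) * (X i - C (a i))) := by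
    ring
  simp only [ballPoly, map_sub, map_sum, map_pow, homothetySubst_X, homothetySubst_C, eval_X,
    eval_C, hterm, C_mul, C_1, Finset.sum_add_distrib, Finset.sum_sub_distrib, ← Finset.mul_sum]
  ring

theorem mul_self_mul_homothetySubst_ballPoly_mem {a : Fin n → ℝ}
    (ha : 0 ≤ eval a (ballPoly u δ)) {t : ℝ} (ht : t ∈ Icc 0 1) {q : MvPolynomial (Fin n) ℝ}
    (hq : q.totalDegree ≤ D) :
    q * q * homothetySubst a t (ballPoly u δ) ∈
      truncatedQuadraticModule (ballPoly u δ) (D + 1) := by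
  have ht' : 0 ≤ 1 - t := sub_nonneg.mpr ht.2
  have hsplit : q * q * homothetySubst a t (ballPoly u δ) =
      C ((1 - t) * eval a (ballPoly u δ)) * (q * q) + C t * (q * q * ballPoly u δ) +
        ∑ i, C (t * (1 - t)) * (q * (X i - C (a i)) * (q * (X i - C (a i)))) := by
    have hterm (i) : C (t * (1 - t)) * (q * (X i - C (a i)) * (q * (X i - C (a i)))) =
        q * q * (C (t * (1 - t)) * ((X i - C (a i)) * (X i - C (a i)))) := by
      ring
    rw [homothetySubst_ballPoly, Finset.sum_congr rfl fun i _ => hterm i,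
      ← Finset.mul_sum _ _ (q * q), C_mul (a := 1 - t)]
    ring
  have hq' := hq.trans D.le_succ
  rw [hsplit]
  refine add_mem (add_mem ?_ ?_) (sum_mem fun i _ => ?_) <;>
    refine C_mul_mem_truncatedQuadraticModule ?_ ?_
  · exact mul_nonneg ht' ha
  · exact mul_self_mem_truncatedQuadraticModule hq'
  · exact ht.1
  · exact mul_self_mul_mem_truncatedQuadraticModule hq'
  · exact mul_nonneg ht.1 ht'
  · exact mul_self_mem_truncatedQuadraticModule <|
      (totalDegree_mul _ _).trans (add_le_add hq (totalDegree_X_sub_C_le i (a i)))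

/-- A homothety of ratio at most `1` centred in the ball maps the ball into itself, so substitution
preserves the quadratic module; the degree bound is uniform in the centre and the ratio. -/
theorem exists_mul_self_mul_homothetySubst_mem {h : MvPolynomial (Fin n) ℝ}
    (hh : h ∈ quadraticModule (ballPoly u δ)) (E : ℕ) :
    ∃ D, ∀ a : Fin n → ℝ, 0 ≤ eval a (ballPoly u δ) → ∀ t ∈ Icc (0 : ℝ) 1,
      ∀ q : MvPolynomial (Fin n) ℝ, q.totalDegree ≤ E →
        q * q * homothetySubst a t h ∈ truncatedQuadraticModule (ballPoly u δ) D := by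
  induction hh using AddSubmonoid.closure_induction with
  | mem h hh =>
    obtain ⟨c, hc, p, rfl⟩ := hh
    refine ⟨E + p.totalDegree + 1, fun a ha t ht q hq => ?_⟩
    have hdeg : (q * homothetySubst a t p).totalDegree ≤ E + p.totalDegree :=
      (totalDegree_mul _ _).trans (add_le_add hq (totalDegree_homothetySubst_le a t p))
    rw [map_mul, map_mul, ← mul_assoc, mul_mul_mul_comm]
    obtain rfl | rfl := hc
    · rw [map_one, mul_one]
      exact mul_self_mem_truncatedQuadraticModule (hdeg.trans (Nat.le_succ _))
    · exact mul_self_mul_homothetySubst_ballPoly_mem ha ht hdeg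
  | zero => exact ⟨0, fun a _ t _ q _ => by simp⟩
  | add h k _ _ hh hk =>
    obtain ⟨D₁, h₁⟩ := hh
    obtain ⟨D₂, h₂⟩ := hk
    refine ⟨max D₁ D₂, fun a ha t ht q hq => ?_⟩
    rw [map_add, mul_add]
    exact add_mem (truncatedQuadraticModule_mono (le_max_left _ _) (h₁ a ha t ht q hq))
      (truncatedQuadraticModule_mono (le_max_right _ _) (h₂ a ha t ht q hq))

open Matrix in
theorem exists_dotProduct_homothetySubst_mulVec_mem {ι : Type*} [Fintype ι]
    {H : Matrix ι ι (MvPolynomial (Fin n) ℝ)}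
    (hH : H ∈ matrixQuadraticModule ι (quadraticModule (ballPoly u δ))) (E : ℕ) :
    ∃ D, ∀ a : Fin n → ℝ, 0 ≤ eval a (ballPoly u δ) → ∀ t ∈ Icc (0 : ℝ) 1,
      ∀ y : ι → MvPolynomial (Fin n) ℝ, (∀ i, (y i).totalDegree ≤ E) →
        y ⬝ᵥ (H.map (homothetySubst a t) *ᵥ y) ∈ truncatedQuadraticModule (ballPoly u δ) D := by
  induction hH using AddSubmonoid.closure_induction with
  | mem H hH =>
    obtain ⟨h, hh, w, rfl⟩ := hH
    obtain ⟨D, hD⟩ := exists_mul_self_mul_homothetySubst_mem hh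
      (Finset.univ.sup fun i => E + (w i).totalDegree)
    refine ⟨D, fun a ha t ht y hy => ?_⟩
    have hsq : y ⬝ᵥ ((h • vecMulVec w w).map (homothetySubst a t) *ᵥ y) =
        (y ⬝ᵥ fun i => homothetySubst a t (w i)) * (y ⬝ᵥ fun i => homothetySubst a t (w i)) *
          homothetySubst a t h := by
      simp only [dotProduct, mulVec, Matrix.map_apply, Matrix.smul_apply, vecMulVec_apply,
        smul_eq_mul, map_mul, Finset.mul_sum, Finset.sum_mul]
      exact Finset.sum_congr rfl fun i _ => Finset.sum_congr rfl fun j _ => by ring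
    rw [hsq]
    refine hD a ha t ht _ ((totalDegree_finsetSum _ _).trans (Finset.sup_mono_fun fun i _ => ?_))
    exact (totalDegree_mul _ _).trans (add_le_add (hy i) (totalDegree_homothetySubst_le a t _))
  | zero => exact ⟨0, fun a _ t _ y _ => by simp [Matrix.map_zero]⟩
  | add H K _ _ hH hK =>
    obtain ⟨D₁, h₁⟩ := hH
    obtain ⟨D₂, h₂⟩ := hK
    refine ⟨max D₁ D₂, fun a ha t ht y hy => ?_⟩
    rw [Matrix.map_add _ (map_add _), add_mulVec, dotProduct_add]
    exact add_mem (truncatedQuadraticModule_mono (le_max_left _ _) (h₁ a ha t ht y hy))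
      (truncatedQuadraticModule_mono (le_max_right _ _) (h₂ a ha t ht y hy))

end BallPoly

section Jensen

theorem le_of_hasDerivAt_of_deriv_zero_of_deriv2_nonpos {φ φ' φ'' : ℝ → ℝ}
    (hφ : ∀ t, HasDerivAt φ (φ' t) t) (hφ' : ∀ t, HasDerivAt φ' (φ'' t) t)
    (h₀ : φ' 0 = 0) (hφ'' : ∀ t ∈ Icc (0 : ℝ) 1, φ'' t ≤ 0) : φ 1 ≤ φ 0 := by
  have hconc : ConcaveOn ℝ (Icc 0 1) φ :=
    concaveOn_of_hasDerivWithinAt2_nonpos (convex_Icc 0 1)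
      (fun t _ => (hφ t).continuousAt.continuousWithinAt) (fun t _ => (hφ t).hasDerivWithinAt)
      (fun t _ => (hφ' t).hasDerivWithinAt) fun t ht => hφ'' t (interior_subset ht)
  have hslope := hconc.slope_le_of_hasDerivAt (left_mem_Icc.mpr zero_le_one)
    (right_mem_Icc.mpr zero_le_one) one_pos (hφ 0)
  rwa [h₀, slope_def_field, sub_zero, div_one, sub_nonpos] at hslope

variable {n : ℕ} {u : Rn n} {δ : ℝ} {D : ℕ} {L : Module.Dual ℝ (MvPolynomial (Fin n) ℝ)}

theorem dual_C (hL₁ : L 1 = 1) (c : ℝ) : L (C c) = c := by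
  simpa [hL₁] using dual_C_mul L c 1

theorem dual_X_sub_C (hL₁ : L 1 = 1) (i : Fin n) : L (X i - C (L (X i))) = 0 := by
  rw [map_sub, dual_C hL₁, sub_self]

theorem eval_ballPoly_nonneg_of_dual (hL₁ : L 1 = 1)
    (hL : ∀ h ∈ truncatedQuadraticModule (ballPoly u δ) 1, 0 ≤ L h) :
    0 ≤ eval (fun i => L (X i)) (ballPoly u δ) := by
  rw [← dual_C hL₁ (eval _ _), C_eval_ballPoly, map_add, map_sum]
  simp only [map_add, dual_C_mul, dual_X_sub_C hL₁, mul_zero, zero_add]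
  refine add_nonneg (hL _ ?_) (Finset.sum_nonneg fun i _ => hL _ ?_)
  · simpa using mul_self_mul_mem_truncatedQuadraticModule (p := 1) (by simp)
  · exact mul_self_mem_truncatedQuadraticModule (totalDegree_X_sub_C_le i _)

open Matrix in
theorem hasDerivAt_sum_dual_mul_homothetySubst_pderiv (a : Fin n → ℝ) (t : ℝ)
    (L : Module.Dual ℝ (MvPolynomial (Fin n) ℝ)) (f : MvPolynomial (Fin n) ℝ) :
    HasDerivAt (fun t => L (∑ i, (X i - C (a i)) * homothetySubst a t (pderiv i f)))
      (L ((fun i => X i - C (a i)) ⬝ᵥ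
        ((hessian f).map (homothetySubst a t) *ᵥ fun i => X i - C (a i)))) t := by
  have hrow (i) : ((hessian f).map (homothetySubst a t) *ᵥ fun j => X j - C (a j)) i =
      ∑ j, (X j - C (a j)) * homothetySubst a t (pderiv j (pderiv i f)) := by
    simp only [mulVec, dotProduct, Matrix.map_apply, hessian_apply, pderiv_pderiv_comm i,
      mul_comm (X _ - C _)]
  simp only [dotProduct, hrow, map_sum L]
  exact HasDerivAt.fun_sum fun i _ => hasDerivAt_dual_mul_homothetySubst a t L _ _

theorem exists_jensen {f : MvPolynomial (Fin n) ℝ}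
    (hf : -hessian f ∈ matrixQuadraticModule (Fin n) (quadraticModule (ballPoly u δ))) :
    ∃ D, ∀ L : Module.Dual ℝ (MvPolynomial (Fin n) ℝ), L 1 = 1 →
      (∀ h ∈ truncatedQuadraticModule (ballPoly u δ) D, 0 ≤ L h) →
        0 ≤ eval (fun i => L (X i)) (ballPoly u δ) ∧ L f ≤ eval (fun i => L (X i)) f := by
  obtain ⟨D, hD⟩ := exists_dotProduct_homothetySubst_mulVec_mem hf 1
  refine ⟨max D 1, fun L hL₁ hL => ?_⟩
  have ha := eval_ballPoly_nonneg_of_dual hL₁ fun h hh =>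
    hL h (truncatedQuadraticModule_mono (le_max_right _ _) hh)
  refine ⟨ha, ?_⟩
  set a : Fin n → ℝ := fun i => L (X i)
  have hφ (t) : HasDerivAt (fun t => L (homothetySubst a t f))
      (L (∑ i, (X i - C (a i)) * homothetySubst a t (pderiv i f))) t := by
    simpa only [one_mul] using hasDerivAt_dual_mul_homothetySubst a t L f 1
  have hφ' := fun t => hasDerivAt_sum_dual_mul_homothetySubst_pderiv a t L f
  have h₀ : L (∑ i, (X i - C (a i)) * homothetySubst a 0 (pderiv i f)) = 0 := by
    simp only [homothetySubst_zero, mul_comm _ (C _), map_sum, dual_C_mul]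
    exact Finset.sum_eq_zero fun i _ => by rw [dual_X_sub_C hL₁, mul_zero]
  have hle := le_of_hasDerivAt_of_deriv_zero_of_deriv2_nonpos hφ hφ' h₀ fun t ht => ?_
  · rwa [homothetySubst_one, homothetySubst_zero, dual_C hL₁] at hle
  · have hmem := hL _ (truncatedQuadraticModule_mono (le_max_left _ _)
      (hD a ha t ht (fun i => X i - C (a i)) fun i => totalDegree_X_sub_C_le i _))
    rwa [Matrix.map_neg _ (map_neg _), Matrix.neg_mulVec, dotProduct_neg, map_neg,
      Left.nonneg_neg_iff] at hmem

theorem isSpectrahedralShadow_of_neg_hessian_mem {f : MvPolynomial (Fin n) ℝ} (hδ : 0 ≤ δ)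
    (hf : -hessian f ∈ matrixQuadraticModule (Fin n) (quadraticModule (ballPoly u δ))) :
    IsSpectrahedralShadow ({x | 0 ≤ peval f x} ∩ closedBall u δ) := by
  obtain ⟨D, hD⟩ := exists_jensen hf
  refine ⟨Module.Dual ℝ (MvPolynomial (Fin n) ℝ), inferInstance, inferInstance, _,
    LinearMap.applyₗ 1, (WithLp.linearEquiv 2 ℝ (Fin n → ℝ)).symm.toLinearMap ∘ₗ
      LinearMap.pi fun i => LinearMap.applyₗ (X i),
    (isSpectrahedralCone_dual_truncatedQuadraticModule (ballPoly u δ) D).inter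
      (.setOf_nonneg (LinearMap.applyₗ f)), ?_⟩
  ext x
  constructor
  · rintro ⟨hfx, hx⟩
    rw [← eval_ballPoly_nonneg_iff hδ] at hx
    refine ⟨(aeval fun i => x i).toLinearMap, ⟨⟨fun h hh => ?_, hfx⟩, ?_⟩, ?_⟩
    · exact eval_nonneg_of_mem_truncatedQuadraticModule hx hh
    · simp
    · ext i; simp
  · rintro ⟨L, ⟨⟨hL, hLf⟩, hL₁⟩, rfl⟩
    obtain ⟨hball, hle⟩ := hD L hL₁ hL
    exact ⟨le_trans hLf hle, (eval_ballPoly_nonneg_iff hδ _).mp hball⟩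

end Jensen

section HasSpectrahedralShadow

variable {E : Type*} [AddCommGroup E] [Module ℝ E] {S S' : Set E} {l l' : Filter E}

/-- Some spectrahedral shadow contained in `S` belongs to the filter `l`. For `l = 𝓝[S] u` this
says that `S` coincides near `u` with a spectrahedral shadow contained in `S`. -/
def HasSpectrahedralShadow (S : Set E) (l : Filter E) : Prop :=
  ∃ C, IsSpectrahedralShadow C ∧ C ⊆ S ∧ C ∈ l

namespace HasSpectrahedralShadow

theorem mono (h : HasSpectrahedralShadow S l) (hS : S ⊆ S') (hl : l' ≤ l) :
    HasSpectrahedralShadow S' l' :=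
  let ⟨C, hC, hCS, hCl⟩ := h
  ⟨C, hC, hCS.trans hS, hl hCl⟩

theorem bot : HasSpectrahedralShadow S ⊥ :=
  ⟨∅, .empty, empty_subset S, mem_bot⟩

theorem inf (h : HasSpectrahedralShadow S l) (h' : HasSpectrahedralShadow S' l') :
    HasSpectrahedralShadow (S ∩ S') (l ⊓ l') :=
  let ⟨C, hC, hCS, hCl⟩ := h
  let ⟨C', hC', hCS', hCl'⟩ := h'
  ⟨C ∩ C', hC.inter hC', inter_subset_inter hCS hCS', inter_mem_inf hCl hCl'⟩

end HasSpectrahedralShadow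

end HasSpectrahedralShadow

section NormedSpace

open Topology

variable {E : Type*} [NormedAddCommGroup E] [NormedSpace ℝ E] {S : Set E} {l l' : Filter E}

namespace HasSpectrahedralShadow

theorem sup (hb : Bornology.IsBounded S) (hconv : Convex ℝ S) (h : HasSpectrahedralShadow S l)
    (h' : HasSpectrahedralShadow S l') : HasSpectrahedralShadow S (l ⊔ l') :=
  let ⟨_, hC, hCS, hCl⟩ := h
  let ⟨_, hC', hCS', hCl'⟩ := h'
  let ⟨D, hD, hsub, hDS⟩ := hC.exists_union_subset hC' hCS hCS' hb hconv
  ⟨D, hD, hDS, mem_of_superset (union_mem_sup hCl hCl') hsub⟩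

theorem iSup {κ : Type*} [Finite κ] {l : κ → Filter E} (hb : Bornology.IsBounded S)
    (hconv : Convex ℝ S) (h : ∀ k, HasSpectrahedralShadow S (l k)) :
    HasSpectrahedralShadow S (⨆ k, l k) := by
  cases nonempty_fintype κ
  rw [← Finset.sup_univ_eq_iSup]
  exact Finset.sup_induction .bot (fun _ hl _ hl' => hl.sup hb hconv hl') fun k _ => h k

end HasSpectrahedralShadow

theorem IsSpectrahedralShadow.of_forall_nhdsWithin (hcpt : IsCompact S) (hconv : Convex ℝ S)
    (h : ∀ u ∈ S, HasSpectrahedralShadow S (𝓝[S] u)) : IsSpectrahedralShadow S := by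
  obtain ⟨C, hC, hCS, hSC⟩ : HasSpectrahedralShadow S (𝓟 S) :=
    hcpt.induction_on (p := fun s => HasSpectrahedralShadow S (𝓟 s))
      (by rw [principal_empty]; exact .bot)
      (fun _ _ hst ht => ht.mono Subset.rfl (principal_mono.mpr hst))
      (fun _ _ hs ht => by rw [← sup_principal]; exact hs.sup hcpt.isBounded hconv ht)
      fun u hu =>
        let ⟨C, hC, hCS, hCu⟩ := h u hu
        ⟨C, hCu, C, hC, hCS, mem_principal_self C⟩
  rwa [(mem_principal.mp hSC).antisymm hCS]

end NormedSpace

section LocalPieces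

open Topology

variable {n : ℕ} {S : Set (Rn n)} {u : Rn n}

theorem isSpectrahedralShadow_closedBall (u : Rn n) {δ : ℝ} (hδ : 0 ≤ δ) :
    IsSpectrahedralShadow (closedBall u δ) := by
  convert isSpectrahedralShadow_of_neg_hessian_mem (u := u) (f := 0) hδ (by simp)
  simp [peval]

theorem HasSpectrahedralShadow.of_mem_nhds (hS : S ∈ 𝓝 u) : HasSpectrahedralShadow S (𝓝 u) :=
  let ⟨δ, hδ, hsub⟩ := nhds_basis_closedBall.mem_iff.mp hS
  ⟨closedBall u δ, isSpectrahedralShadow_closedBall u (le_of_lt hδ), hsub,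
    closedBall_mem_nhds u hδ⟩

theorem HasSpectrahedralShadow.iInter {ι : Type*} [Finite ι] {S : ι → Set (Rn n)}
    (h : ∀ i, HasSpectrahedralShadow (S i) (𝓝[S i] u)) :
    HasSpectrahedralShadow (⋂ i, S i) (𝓝[⋂ i, S i] u) := by
  classical
  cases nonempty_fintype ι
  suffices ∀ s : Finset ι, HasSpectrahedralShadow (⋂ i ∈ s, S i) (𝓝[⋂ i ∈ s, S i] u) by
    simpa using this Finset.univ
  intro s
  induction s using Finset.induction_on with
  | empty => simpa using of_mem_nhds univ_mem
  | insert i s _ hs =>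
    rw [Finset.set_biInter_insert, nhdsWithin_inter]
    exact (h i).inf hs

theorem HasSpectrahedralShadow.of_neg_hessian_mem {f g : MvPolynomial (Fin n) ℝ}
    (hf : -hessian f ∈ matrixQuadraticModule (Fin n) (ballGerm u))
    (hfg : ∀ᶠ x in 𝓝 u, 0 ≤ peval f x ↔ 0 ≤ peval g x) :
    HasSpectrahedralShadow {x | 0 ≤ peval g x} (𝓝[{x | 0 ≤ peval g x}] u) := by
  obtain ⟨δ, ⟨hδ, hfδ⟩, hfgδ⟩ := ((eventually_mem_nhdsWithin.and
    (matrixQuadraticModule_ballGerm_eventually hf)).and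
      ((eventually_closedBall_subset hfg).filter_mono nhdsWithin_le_nhds)).exists
  refine ⟨_, isSpectrahedralShadow_of_neg_hessian_mem (le_of_lt hδ) hfδ,
    fun x hx => (hfgδ hx.2).mp hx.1, ?_⟩
  filter_upwards [self_mem_nhdsWithin, mem_nhdsWithin_of_mem_nhds (closedBall_mem_nhds u hδ)]
    with x hgx hx using ⟨(hfgδ hx).mpr hgx, hx⟩

theorem hasSpectrahedralShadow_setOf_peval_nonneg {g : MvPolynomial (Fin n) ℝ}
    (hu : 0 ≤ peval g u) (h : peval g u = 0 → SosConcave g ∨ StrictlyQuasiConcaveAt g u) :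
    HasSpectrahedralShadow {x | 0 ≤ peval g x} (𝓝[{x | 0 ≤ peval g x}] u) := by
  obtain hpos | hzero := hu.lt_or_eq
  · refine (HasSpectrahedralShadow.of_mem_nhds ?_).mono Subset.rfl nhdsWithin_le_nhds
    exact ((continuous_peval g).continuousAt.eventually_const_lt hpos).mono fun _ => le_of_lt
  obtain hsos | hqc := h hzero.symm
  · exact .of_neg_hessian_mem (hsos.neg_hessian_mem (isQuadraticModule_ballGerm u)) (by simp)
  · obtain ⟨f, hf, hfg⟩ := hqc.exists_neg_hessian_mem hzero.symm
    exact .of_neg_hessian_mem hf hfg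

theorem hasSpectrahedralShadow_iInter_setOf_peval_nonneg {ι : Type*} [Finite ι]
    {g : ι → MvPolynomial (Fin n) ℝ}
    (h : ∀ i, peval (g i) u = 0 → SosConcave (g i) ∨ StrictlyQuasiConcaveAt (g i) u) :
    HasSpectrahedralShadow (⋂ i, {x | 0 ≤ peval (g i) x}) (𝓝[⋂ i, {x | 0 ≤ peval (g i) x}] u) := by
  by_cases hu : ∀ i, 0 ≤ peval (g i) u
  · exact .iInter fun i => hasSpectrahedralShadow_setOf_peval_nonneg (hu i) (h i)
  · have hclosed : IsClosed (⋂ i, {x | 0 ≤ peval (g i) x}) :=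
      isClosed_iInter fun i => isClosed_le continuous_const (continuous_peval (g i))
    have hbot : 𝓝[⋂ i, {x | 0 ≤ peval (g i) x}] u = ⊥ := by
      rw [← notMem_closure_iff_nhdsWithin_eq_bot, hclosed.closure_eq]
      simpa using hu
    rw [hbot]
    exact .bot

end LocalPieces

open Topology in
theorem isSDPRepresentable_union_of_sosConcave_or_strictlyQuasiConcave_general {n : ℕ}
    {κ : Type*} [Finite κ] {ι : κ → Type*} [∀ k, Finite (ι k)]
    (g : ∀ k, ι k → MvPolynomial (Fin n) ℝ) (S : Set (Rn n))
    (hS : S = ⋃ k, {x | ∀ i, 0 ≤ peval (g k i) x}) (hcpt : IsCompact S) (hconv : Convex ℝ S)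
    (h : ∀ u ∈ frontier S, ∀ k i, peval (g k i) u = 0 →
      SosConcave (g k i) ∨ StrictlyQuasiConcaveAt (g k i) u) : IsSDPRepresentable S := by
  let T (k) : Set (Rn n) := ⋂ i, {x | 0 ≤ peval (g k i) x}
  replace hS : S = ⋃ k, T k := by simpa only [Set.ofPred_forall] using hS
  refine (IsSpectrahedralShadow.of_forall_nhdsWithin hcpt hconv fun u hu => ?_).isSDPRepresentable
  by_cases hint : u ∈ interior S
  · exact (HasSpectrahedralShadow.of_mem_nhds (mem_interior_iff_mem_nhds.mp hint)).mono
      Subset.rfl nhdsWithin_le_nhds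
  · have hfr : u ∈ frontier S := ⟨subset_closure hu, hint⟩
    have hT (k) : HasSpectrahedralShadow S (𝓝[T k] u) :=
      (hasSpectrahedralShadow_iInter_setOf_peval_nonneg (h u hfr k)).mono
        ((subset_iUnion T k).trans hS.ge) le_rfl
    have hnhds : 𝓝[S] u = ⨆ k, 𝓝[T k] u := by
      rw [hS, nhdsWithin_iUnion]
    rw [hnhds]
    exact .iSup hcpt.isBounded hconv hT

/-- sufficient conditions for SDP representability of a compact convex
set `S = ⋃ₖ Tₖ` which is a union of basic closed semialgebraic sets. -/
theorem isSDPRepresentable_union_of_sosConcave_or_strictlyQuasiConcave {n m : ℕ}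
    (mk : Fin m → ℕ) (g : ∀ k, Fin (mk k) → MvPolynomial (Fin n) ℝ)
    (T : Fin m → Set (Rn n))
    (hT : ∀ k, T k = {x : Rn n | ∀ i, 0 ≤ peval (g k i) x})
    (S : Set (Rn n)) (hS : S = ⋃ k, T k)
    (hcpt : IsCompact S) (hconv : Convex ℝ S)
    (h : ∀ u ∈ frontier S, ∀ (k : Fin m) (i : Fin (mk k)), peval (g k i) u = 0 →
      (∀ δ > 0, ∃ v ∈ ball u δ, ∀ j, 0 < peval (g k j) v) ∧
      (SosConcave (g k i) ∨ StrictlyQuasiConcaveAt (g k i) u)) :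
    IsSDPRepresentable S := by
  obtain rfl : T = fun k => {x | ∀ i, 0 ≤ peval (g k i) x} := funext hT
  exact isSDPRepresentable_union_of_sosConcave_or_strictlyQuasiConcave_general g S hS hcpt hconv
    fun u hu k i hgu => (h u hu k i hgu).2
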